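/- Let G be a finite simple graph, let u and v be vertices of G, and let X be a set of vertices with u in X and v not in X. Let U be a set of edges of G such that every walk in G from u to v traverses an even number of edges of U (counted with multiplicity along the edge sequence of the walk). Then every walk in G from u to v traverses an odd number (in particular, at least one) of the edges of the symmetric difference of the edge boundary of X and U; consequently, u and v lie in different connected components of the graph obtained from G by deleting the edges of this symmetric difference. -/

import Mathlib

/-!
Each step of a walk changes membership in `X` exactly when its edge lies in the boundary of `X`,
so a walk from `u ∈ X` to `v ∉ X` crosses the boundary an odd number of times
(`countP_edgeBoundarySet_odd_iff`). Modulo two, the count of a symmetric difference is the sum of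
the counts (`countP_symmDiff_mod_two`); since `U` contributes an even number, the total is odd.
A walk surviving the deletion would have count zero.
-/

/-- The edge boundary of a vertex set `X` in a simple graph `G`: the set of edges of `G`
with exactly one endpoint in `X`. -/
def SimpleGraph.edgeBoundarySet {V : Type*} (G : SimpleGraph V) (X : Set V) :
    Set (Sym2 V) :=
  {e | e ∈ G.edgeSet ∧ ∃ x y : V, e = s(x, y) ∧ x ∈ X ∧ y ∉ X}

open Classical in
/-- A walk crosses the boundary of `X` an odd number of times exactly when one of its two ends
lies in `X` and the other does not. -/
theorem countP_edgeBoundarySet_odd_iff {V : Type*} (G : SimpleGraph V) (X : Set V) {a b : V}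
    (w : G.Walk a b) :
    (w.edges.countP fun e => decide (e ∈ G.edgeBoundarySet X)) % 2 = 1 ↔
      ¬ (a ∈ X ↔ b ∈ X) := by
  induction w with
  | nil => simp
  | @cons a c b h p ih =>
    have hmem : s(a, c) ∈ G.edgeBoundarySet X ↔ ¬ (a ∈ X ↔ c ∈ X) := by
      constructor
      · rintro ⟨-, x, y, hxy, hx, hy⟩
        rcases Sym2.eq_iff.1 hxy with ⟨rfl, rfl⟩ | ⟨rfl, rfl⟩ <;> tauto
      · intro hne
        refine ⟨h, ?_⟩
        by_cases ha : a ∈ X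
        · exact ⟨a, c, rfl, ha, by tauto⟩
        · exact ⟨c, a, Sym2.eq_swap, by tauto, ha⟩
    rw [SimpleGraph.Walk.edges_cons, List.countP_cons]
    by_cases ha : a ∈ X <;> by_cases hc : c ∈ X <;> by_cases hb : b ∈ X <;>
      simp [hmem, ha, hc, hb] at ih ⊢ <;> omega

open Classical in
theorem countP_symmDiff_mod_two {α : Type*} (A B : Set α) (l : List α) :
    (l.countP fun e => decide (e ∈ symmDiff A B)) % 2 =
      ((l.countP fun e => decide (e ∈ A)) + l.countP fun e => decide (e ∈ B)) % 2 := by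
  induction l with
  | nil => simp
  | cons x l ih =>
    simp only [List.countP_cons]
    by_cases hA : x ∈ A <;> by_cases hB : x ∈ B <;>
      simp [Set.mem_symmDiff, hA, hB] at ih ⊢ <;> omega

open Classical in
/-- Let `X` be a vertex set with `u ∈ X`, `v ∉ X`, and let `U` be a set of
edges of `G` such that every walk from `u` to `v` traverses an even number of edges of `U`
(with multiplicity). Then every walk from `u` to `v` traverses an odd number of edges of the
symmetric difference of the edge boundary of `X` and `U`; consequently `u` and `v` lie in
different connected components of `G` minus this symmetric difference. -/
theorem symmDiff_edgeBoundary_separates {V : Type*} [Fintype V]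
    (G : SimpleGraph V) (u v : V) (X : Set V) (hu : u ∈ X) (hv : v ∉ X)
    (U : Set (Sym2 V)) (hU : U ⊆ G.edgeSet)
    (hEven : ∀ w : G.Walk u v, (w.edges.countP fun e => decide (e ∈ U)) % 2 = 0) :
    (∀ w : G.Walk u v,
        (w.edges.countP fun e => decide (e ∈ symmDiff (G.edgeBoundarySet X) U)) % 2 = 1) ∧
      ¬ (G.deleteEdges (symmDiff (G.edgeBoundarySet X) U)).Reachable u v := by
  have hodd : ∀ w : G.Walk u v,
      (w.edges.countP fun e => decide (e ∈ symmDiff (G.edgeBoundarySet X) U)) % 2 = 1 := by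
    intro w
    have h1 := (countP_edgeBoundarySet_odd_iff G X w).2 (by tauto)
    have h2 := hEven w
    rw [countP_symmDiff_mod_two]
    omega
  refine ⟨hodd, ?_⟩
  rintro ⟨p⟩
  -- A walk avoiding the deleted edges is a walk of `G` with count zero, which is not odd.
  have h := hodd (p.mapLe (G.deleteEdges_le _))
  rw [List.countP_eq_zero.2] at h
  · simp at h
  · intro e he
    rw [SimpleGraph.Walk.edges_mapLe_eq_edges] at he
    have := p.edges_subset_edgeSet he
    rw [SimpleGraph.edgeSet_deleteEdges] at this
    simpa using this.2
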